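/- Let d ≥ 1 and let X ⊆ ℝ^d be a convex set. Let n ≥ 1 and let 𝒳ₙ be a finite subset of X that is quasi-uniformly distributed in X with constants c, C (so 0 < c ≤ 2C). Let κ > 0, α > (d+2)/2, and let K ∈ 𝕂_{κ,α} with m₁ := min_{|x|≤1} K(x) > 0. Set βₙ := C^{−1} n^{1/d} and S_{K,n}(x) := Σ_{y∈𝒳ₙ} K(βₙ(x−y)). Then for every bounded continuous function f : X → ℝ and every x ∈ X, |f(x) − S_{K,n}(x)^{−1} Σ_{y∈𝒳ₙ} f(y) K(βₙ(x−y))| ≤ κ · m₁^{−1} · (C+1) · K_d · (1 + Σ_{j=1}^∞ [(j+1)^{d+1} − (j+1)j^d] · j^{−2α}) · ω(f, n^{−1/d}), where K_d := 2^{(3d+3)/2} (C/c)^d and the series converges since 2α > d+2. -/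

import Mathlib

open Metric

/-- The modulus of continuity of `f` on the set `X`. -/
noncomputable def omegaMod {d : ℕ} (X : Set (EuclideanSpace ℝ (Fin d)))
    (f : EuclideanSpace ℝ (Fin d) → ℝ) (t : ℝ) : ℝ :=
  sSup {v : ℝ | ∃ x ∈ X, ∃ y ∈ X, ‖x - y‖ ≤ t ∧ v = |f x - f y|}

/-!
Write `δ = C * n ^ (-1 / d)` and `ρ y = √(1 + ‖(x - y) / δ‖ ^ 2)`. Subdividing segments of the
convex set `X` shows that `|f x - f y|` grows at most linearly in `‖x - y‖`, so the decay of `K`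
makes the contribution of the node `y` to the error at most a constant times `ρ y ^ (1 - 2 * α)`.
Since `1 + ‖z‖ ≤ √2 * √(1 + ‖z‖ ^ 2)`, volume comparison bounds the number of nodes with `ρ y < k`
by `(2 * √2 * C / c) ^ d * k ^ d`, with no lower-order term. Abel summation over the shells
`k ≤ ρ y < k + 1` then bounds the sum of these contributions by a constant times
`(2 * √2 * C / c) ^ d * (1 + ∑_{k ≥ 1} ((k + 1) ^ d - k ^ d) * k ^ (1 - 2 * α))`, and the `k`-th
term of the stated series is `(k + 1) / k` times the `k`-th term of this one.
-/

open MeasureTheory Module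
open scoped Finset

lemma norm_sub_centerMass_le {ι F : Type*} [SeminormedAddCommGroup F] [NormedSpace ℝ F]
    {S : Finset ι} {w : ι → ℝ} (hw : ∀ i ∈ S, 0 ≤ w i) (hpos : 0 < ∑ i ∈ S, w i)
    (f : ι → F) (a : F) :
    ‖a - S.centerMass w f‖ ≤ (∑ i ∈ S, w i)⁻¹ * ∑ i ∈ S, w i * ‖a - f i‖ := by
  have hdiff : a - S.centerMass w f = (∑ i ∈ S, w i)⁻¹ • ∑ i ∈ S, w i • (a - f i) := by
    simp only [smul_sub, Finset.sum_sub_distrib, ← Finset.sum_smul, Finset.centerMass,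
      inv_smul_smul₀ hpos.ne']
  rw [hdiff, norm_smul, norm_inv, Real.norm_of_nonneg hpos.le]
  gcongr
  refine norm_sum_le_of_le S fun i hi => ?_
  rw [norm_smul, Real.norm_of_nonneg (hw i hi)]

section Summation

variable {ι : Type*} {S : Finset ι}

lemma sum_filter_lt_succ {M : Type*} [AddCommMonoid M] (g : ι → ℕ) (φ : ι → M) (J : ℕ) :
    ∑ i ∈ S with g i < J + 1, φ i = ∑ i ∈ S with g i < J, φ i + ∑ i ∈ S with g i = J, φ i := by
  simp only [Finset.sum_filter, ← Finset.sum_add_distrib]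
  refine Finset.sum_congr rfl fun i _ => ?_
  grind

-- Abel summation, run as an induction on `J` that carries the boundary term
-- `w J * (G J - #{i ∈ S | g i < J})`.
lemma sum_comp_le_of_card_filter_lt_le {g : ι → ℕ} {w G : ℕ → ℝ} (hw : Antitone w)
    (hw_nonneg : ∀ j, 0 ≤ w j) (hG : ∀ j, (#{i ∈ S | g i < j} : ℝ) ≤ G j) {J : ℕ}
    (hJ : ∀ i ∈ S, g i < J) :
    ∑ i ∈ S, w (g i) ≤ w 0 * G 0 + ∑ j ∈ Finset.range J, w j * (G (j + 1) - G j) := by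
  have habel (J : ℕ) : ∑ i ∈ S with g i < J, w (g i) + w J * (G J - #{i ∈ S | g i < J}) ≤
      w 0 * G 0 + ∑ j ∈ Finset.range J, w j * (G (j + 1) - G j) := by
    induction J with
    | zero => simp
    | succ J ih =>
      have hsum : ∑ i ∈ S with g i = J, w (g i) = w J * #{i ∈ S | g i = J} := by
        rw [Finset.sum_congr rfl fun i hi => by rw [(Finset.mem_filter.1 hi).2],
          Finset.sum_const, nsmul_eq_mul, mul_comm]
      have hcard : (#{i ∈ S | g i < J + 1} : ℝ) = #{i ∈ S | g i < J} + #{i ∈ S | g i = J} := by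
        rw [Finset.card_eq_sum_ones, sum_filter_lt_succ]
        simp only [Finset.card_eq_sum_ones, Nat.cast_add]
      have hdrop := mul_le_mul_of_nonneg_right (hw J.le_succ) (sub_nonneg.2 (hG (J + 1)))
      rw [Finset.sum_range_succ, sum_filter_lt_succ g fun i => w (g i), hsum]
      rw [hcard] at hdrop ⊢
      linarith
  have hboundary := mul_nonneg (hw_nonneg J) (sub_nonneg.2 (hG J))
  have hfilter : S.filter (g · < J) = S := Finset.filter_true_of_mem hJ
  have hJ_abel := habel J
  rw [hfilter] at hJ_abel hboundary
  linarith

/-- The `j`-th term of the series `∑_{k ≥ 1} ((k + 1) ^ d - k ^ d) * k ^ (-p)`, with `k = j + 1`. It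
bounds the contribution of the shell `k ≤ ρ < k + 1` to a sum of `ρ ^ (-p)` over points with volume
growth `ρ ^ d`. -/
noncomputable def shellTerm (d : ℕ) (p : ℝ) (j : ℕ) : ℝ :=
  (((j : ℝ) + 2) ^ d - ((j : ℝ) + 1) ^ d) * ((j : ℝ) + 1) ^ (-p)

lemma shellTerm_nonneg (d : ℕ) (p : ℝ) (j : ℕ) : 0 ≤ shellTerm d p j := by
  have hpow : ((j : ℝ) + 1) ^ d ≤ ((j : ℝ) + 2) ^ d := by gcongr; norm_num
  exact mul_nonneg (sub_nonneg.2 hpow) (by positivity)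

lemma succ_pow_sub_pow_le {t : ℝ} (ht : 1 ≤ t) (d : ℕ) :
    (t + 1) ^ (d + 1) - t ^ (d + 1) ≤ (d + 1) * 2 ^ d * t ^ d := by
  have hmean := abs_pow_sub_pow_le (t + 1) t (d + 1)
  rw [abs_of_nonneg (by positivity : 0 ≤ t), abs_of_nonneg (by positivity : 0 ≤ t + 1),
    max_eq_left (by linarith), add_sub_cancel_left, abs_one, one_mul, Nat.add_sub_cancel,
    Nat.cast_succ] at hmean
  calc (t + 1) ^ (d + 1) - t ^ (d + 1) ≤ (d + 1) * (t + 1) ^ d := (le_abs_self _).trans hmean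
    _ ≤ (d + 1) * (2 * t) ^ d := by gcongr; linarith
    _ = (d + 1) * 2 ^ d * t ^ d := by rw [mul_pow]; ring

lemma summable_shellTerm {d : ℕ} {p : ℝ} (hp : d < p) : Summable (shellTerm d p) := by
  rcases d with _ | d
  · exact summable_zero.congr fun j => by simp [shellTerm]
  push_cast at hp
  have hmajorant :
      Summable fun j : ℕ => ((d : ℝ) + 1) * 2 ^ d * ((j + 1 : ℕ) : ℝ) ^ ((d : ℝ) - p) :=
    ((summable_nat_add_iff 1).2 (Real.summable_nat_rpow.2 (by linarith))).mul_left _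
  refine hmajorant.of_nonneg_of_le (shellTerm_nonneg _ p) fun j => ?_
  have hj : (0 : ℝ) < j + 1 := by positivity
  have hincr := succ_pow_sub_pow_le (t := (j : ℝ) + 1) (by simp) d
  rw [add_assoc, one_add_one_eq_two] at hincr
  calc shellTerm (d + 1) p j
      ≤ (d + 1) * 2 ^ d * ((j : ℝ) + 1) ^ d * ((j : ℝ) + 1) ^ (-p) := by
        unfold shellTerm; gcongr
    _ = (d + 1) * 2 ^ d * ((j + 1 : ℕ) : ℝ) ^ ((d : ℝ) - p) := by
        rw [Nat.cast_succ, sub_eq_add_neg, Real.rpow_add hj, Real.rpow_natCast, mul_assoc]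

lemma sum_rpow_neg_le_of_card_filter_lt_le {ρ : ι → ℝ} (hρ : ∀ i ∈ S, 1 ≤ ρ i) {d : ℕ} {M p : ℝ}
    (hp : d < p) (hM : ∀ k : ℕ, (#{i ∈ S | ρ i < k} : ℝ) ≤ M * (k : ℝ) ^ d) :
    ∑ i ∈ S, ρ i ^ (-p) ≤ M * (1 + ∑' j, shellTerm d p j) := by
  have hp_nonneg : 0 ≤ p := d.cast_nonneg.trans hp.le
  have hM_nonneg : 0 ≤ M := by simpa using (Nat.cast_nonneg _).trans (hM 1)
  let g (i : ι) : ℕ := ⌊ρ i⌋₊ - 1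
  have hg {i : ι} (hi : i ∈ S) : g i + 1 = ⌊ρ i⌋₊ :=
    Nat.sub_add_cancel (Nat.one_le_floor_iff _ |>.2 (hρ i hi))
  let w (j : ℕ) : ℝ := ((j : ℝ) + 1) ^ (-p)
  have hw : Antitone w := fun i j hij =>
    Real.rpow_le_rpow_of_nonpos (by positivity) (by gcongr) (neg_nonpos.2 hp_nonneg)
  have hG (j : ℕ) : (#{i ∈ S | g i < j} : ℝ) ≤ M * ((j : ℝ) + 1) ^ d := by
    have hiff : ∀ i ∈ S, (g i < j ↔ ρ i < (j + 1 : ℕ)) := fun i hi => by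
      rw [← Nat.floor_lt (zero_le_one.trans (hρ i hi)), ← hg hi, Nat.add_lt_add_iff_right]
    rw [Finset.filter_congr hiff]
    exact_mod_cast hM (j + 1)
  obtain ⟨J, hJ⟩ : ∃ J, ∀ i ∈ S, g i < J :=
    ⟨S.sup g + 1, fun i hi => Nat.lt_succ_of_le (Finset.le_sup hi)⟩
  calc ∑ i ∈ S, ρ i ^ (-p) ≤ ∑ i ∈ S, w (g i) := Finset.sum_le_sum fun i hi => by
        have hfloor : (g i : ℝ) + 1 ≤ ρ i := by
          exact_mod_cast hg hi ▸ Nat.floor_le (zero_le_one.trans (hρ i hi))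
        exact Real.rpow_le_rpow_of_nonpos (by positivity) hfloor (neg_nonpos.2 hp_nonneg)
    _ ≤ w 0 * (M * ((0 : ℕ) + 1) ^ d) + ∑ j ∈ Finset.range J,
          w j * (M * ((j + 1 : ℕ) + 1) ^ d - M * ((j : ℝ) + 1) ^ d) :=
        sum_comp_le_of_card_filter_lt_le hw (fun j => by positivity) hG hJ
    _ = M * (1 + ∑ j ∈ Finset.range J, shellTerm d p j) := by
        rw [mul_add, Finset.mul_sum]
        congr 1
        · simp [w]
        · refine Finset.sum_congr rfl fun j _ => ?_
          simp only [w, shellTerm]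
          push_cast
          ring
    _ ≤ M * (1 + ∑' j, shellTerm d p j) := by
        gcongr
        exact (summable_shellTerm hp).sum_le_tsum _ fun j _ => shellTerm_nonneg d p j

end Summation

section Separated

variable {E : Type*} [NormedAddCommGroup E] [NormedSpace ℝ E] [FiniteDimensional ℝ E]
  {S : Finset E} {s : ℝ} (x : E)

-- The balls of radius `s / 2` about the points are disjoint and lie in `ball x (R + s / 2)`.
lemma card_le_of_pairwise_le_norm_sub (hs : 0 < s)
    (hsep : (S : Set E).Pairwise fun y z => s ≤ ‖y - z‖) {R : ℝ} (hR : 0 ≤ R)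
    (hball : ∀ y ∈ S, ‖x - y‖ ≤ R) : (#S : ℝ) ≤ (2 * R / s + 1) ^ finrank ℝ E := by
  let _ : MeasurableSpace E := borel E
  have _ : BorelSpace E := ⟨rfl⟩
  let μ : Measure E := Measure.addHaar
  have hvol (y : E) {r : ℝ} (hr : 0 < r) :
      μ.real (ball y r) = r ^ finrank ℝ E * μ.real (ball 0 1) := by
    rw [measureReal_def, μ.addHaar_ball_of_pos y hr, ENNReal.toReal_mul,
      ENNReal.toReal_ofReal (by positivity), measureReal_def]
  have hunit : 0 < μ.real (ball (0 : E) 1) :=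
    ENNReal.toReal_pos (measure_ball_pos μ 0 one_pos).ne' measure_ball_lt_top.ne
  have hdisj : (S : Set E).PairwiseDisjoint fun y => ball y (s / 2) := fun y hy z hz hyz =>
    ball_disjoint_ball (by rw [dist_eq_norm, add_halves]; exact hsep hy hz hyz)
  have hsub : ⋃ y ∈ S, ball y (s / 2) ⊆ ball x (R + s / 2) :=
    Set.iUnion₂_subset fun y hy => ball_subset_ball' <| by
      rw [dist_comm, dist_eq_norm, add_comm]
      gcongr
      exact hball y hy
  have hmono := measureReal_mono (μ := μ) hsub measure_ball_lt_top.ne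
  rw [measureReal_biUnion_finset hdisj fun _ _ => measurableSet_ball,
    Finset.sum_congr rfl fun y _ => hvol y (half_pos hs), Finset.sum_const, nsmul_eq_mul,
    hvol x (by positivity), ← mul_assoc] at hmono
  have hpow : (#S : ℝ) * (s / 2) ^ finrank ℝ E ≤ (R + s / 2) ^ finrank ℝ E :=
    le_of_mul_le_mul_right hmono hunit
  calc (#S : ℝ) ≤ (R + s / 2) ^ finrank ℝ E / (s / 2) ^ finrank ℝ E :=
        (le_div_iff₀ (by positivity)).2 hpow
    _ = (2 * R / s + 1) ^ finrank ℝ E := by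
        rw [← div_pow]
        congr 1
        field_simp

lemma card_filter_sqrt_lt_le (hs : 0 < s) (hsep : (S : Set E).Pairwise fun y z => s ≤ ‖y - z‖)
    {δ : ℝ} (hsδ : s ≤ 2 * δ) {a : ℝ} (ha : 0 ≤ a) :
    (#{y ∈ S | √(1 + ‖δ⁻¹ • (x - y)‖ ^ 2) < a} : ℝ) ≤
      (2 * √2 * (δ / s)) ^ finrank ℝ E * a ^ finrank ℝ E := by
  have hδ : 0 < δ := by linarith
  rcases Finset.eq_empty_or_nonempty {y ∈ S | √(1 + ‖δ⁻¹ • (x - y)‖ ^ 2) < a} with hempty | ⟨y, hy⟩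
  · rw [hempty, Finset.card_empty, Nat.cast_zero]
    positivity
  have ha_one : 1 ≤ a := by
    refine (Real.one_le_sqrt.2 ?_).trans (Finset.mem_filter.1 hy).2.le
    exact le_add_of_nonneg_right (by positivity)
  have hsqrt : 1 ≤ √2 * a := one_le_mul_of_one_le_of_one_le (Real.one_le_sqrt.2 one_le_two) ha_one
  have hball : ∀ y ∈ S.filter fun y => √(1 + ‖δ⁻¹ • (x - y)‖ ^ 2) < a,
      ‖x - y‖ ≤ (√2 * a - 1) * δ := fun y hy => by
    have hbracket : 1 + ‖δ⁻¹ • (x - y)‖ ≤ √2 * a :=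
      (one_add_norm_le_sqrt_two_mul_sqrt _).trans
        (mul_le_mul_of_nonneg_left (Finset.mem_filter.1 hy).2.le (Real.sqrt_nonneg 2))
    rw [norm_smul_of_nonneg (inv_nonneg.2 hδ.le), inv_mul_eq_div] at hbracket
    exact (div_le_iff₀ hδ).1 (le_sub_iff_add_le'.2 hbracket)
  refine (card_le_of_pairwise_le_norm_sub x hs (hsep.mono (Finset.filter_subset _ S))
    (mul_nonneg (sub_nonneg.2 hsqrt) hδ.le) hball).trans ?_
  rw [← mul_pow]
  have hratio : 1 ≤ 2 * (δ / s) := by rwa [← mul_div_assoc, one_le_div hs]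
  have hbase : 0 ≤ 2 * ((√2 * a - 1) * δ) / s :=
    div_nonneg (mul_nonneg zero_le_two (mul_nonneg (sub_nonneg.2 hsqrt) hδ.le)) hs.le
  refine pow_le_pow_left₀ (add_nonneg hbase zero_le_one) ?_ _
  calc 2 * ((√2 * a - 1) * δ) / s + 1 = 2 * √2 * (δ / s) * a - (2 * (δ / s) - 1) := by ring
    _ ≤ 2 * √2 * (δ / s) * a := sub_le_self _ (sub_nonneg.2 hratio)

end Separated

lemma norm_sub_le_of_convex {E F : Type*} [SeminormedAddCommGroup E] [NormedSpace ℝ E]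
    [SeminormedAddCommGroup F] {X : Set E} (hX : Convex ℝ X) {f : E → F} {t ω : ℝ} (ht : 0 < t)
    (hf : ∀ x ∈ X, ∀ y ∈ X, ‖x - y‖ ≤ t → ‖f x - f y‖ ≤ ω) {x y : E} (hx : x ∈ X) (hy : y ∈ X) :
    ‖f x - f y‖ ≤ (1 + ‖x - y‖ / t) * ω := by
  have hω : 0 ≤ ω := (norm_nonneg _).trans (hf x hx x hx (by simpa using ht.le))
  let m : ℕ := ⌊‖x - y‖ / t⌋₊ + 1
  have hm : (0 : ℝ) < m := by positivity
  have hm_le : (m : ℝ) ≤ 1 + ‖x - y‖ / t := by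
    rw [Nat.cast_succ, add_comm]
    gcongr
    exact Nat.floor_le (by positivity)
  have hmesh : ‖x - y‖ / m ≤ t := by
    have hlt := Nat.lt_floor_add_one (‖x - y‖ / t)
    rw [← Nat.cast_succ, div_lt_iff₀ ht] at hlt
    exact (div_le_iff₀' hm).2 hlt.le
  let p (i : ℕ) : E := AffineMap.lineMap x y ((i : ℝ) / m)
  have hp {i : ℕ} (hi : i ≤ m) : p i ∈ X :=
    hX.lineMap_mem hx hy ⟨by positivity, div_le_one_of_le₀ (by exact_mod_cast hi) hm.le⟩
  have hstep (i : ℕ) : ‖p i - p (i + 1)‖ ≤ t := by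
    rw [← dist_eq_norm, dist_lineMap_lineMap, dist_comm, Real.dist_eq, ← sub_div, Nat.cast_succ,
      add_sub_cancel_left, abs_of_nonneg (by positivity), one_div_mul_eq_div, dist_eq_norm]
    exact hmesh
  have hchain := dist_le_range_sum_of_dist_le (f := fun i => f (p i)) (d := fun _ => ω) m
    fun {i} hi => by
      rw [dist_eq_norm]
      exact hf _ (hp hi.le) _ (hp hi) (hstep i)
  have hstart : p 0 = x := by simp [p]
  have hend : p m = y := by simp [p, hm.ne']
  rw [hstart, hend, dist_eq_norm, Finset.sum_const, Finset.card_range, nsmul_eq_mul] at hchain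
  exact hchain.trans (by gcongr)

lemma one_add_mul_norm_mul_rpow_neg_le {E : Type*} [SeminormedAddCommGroup E] {A : ℝ} (hA : 0 ≤ A)
    (α : ℝ) (z : E) :
    (1 + A * ‖z‖) * (1 + ‖z‖ ^ 2) ^ (-α) ≤ (1 + A) * √(1 + ‖z‖ ^ 2) ^ (-(2 * α - 1)) := by
  set ρ := √(1 + ‖z‖ ^ 2)
  have hρ_sq : ρ ^ 2 = 1 + ‖z‖ ^ 2 := Real.sq_sqrt (by positivity)
  have hρ_one : 1 ≤ ρ := Real.one_le_sqrt.2 (le_add_of_nonneg_right (by positivity))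
  have hρ_norm : ‖z‖ ≤ ρ := Real.le_sqrt_of_sq_le (le_add_of_nonneg_left zero_le_one)
  have hlinear : 1 + A * ‖z‖ ≤ (1 + A) * ρ := by
    rw [add_mul, one_mul]
    gcongr
  have hpower : (1 + ‖z‖ ^ 2) ^ (-α) = ρ ^ (-(2 * α)) := by
    rw [← hρ_sq, ← Real.rpow_natCast_mul (by positivity)]
    congr 1
    push_cast
    ring
  have hmerge : ρ * ρ ^ (-(2 * α)) = ρ ^ (-(2 * α - 1)) := by
    rw [neg_sub, sub_eq_add_neg, Real.rpow_add (one_pos.trans_le hρ_one), Real.rpow_one]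
  calc (1 + A * ‖z‖) * (1 + ‖z‖ ^ 2) ^ (-α) ≤ (1 + A) * ρ * ρ ^ (-(2 * α)) := by
        rw [hpower]; gcongr
    _ = (1 + A) * ρ ^ (-(2 * α - 1)) := by rw [mul_assoc, hmerge]

lemma kernel_mul_norm_sub_le {E F : Type*} [SeminormedAddCommGroup E] [NormedSpace ℝ E]
    [SeminormedAddCommGroup F] {X : Set E} (hX : Convex ℝ X) {δ t : ℝ} (hδ : 0 < δ) (ht : 0 < t)
    {κ α : ℝ} {K : E → ℝ} (hK_nonneg : ∀ z, 0 ≤ K z)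
    (hK_decay : ∀ z, K z ≤ κ * (1 + ‖z‖ ^ 2) ^ (-α)) {f : E → F} {ω : ℝ}
    (hω : ∀ x ∈ X, ∀ y ∈ X, ‖x - y‖ ≤ t → ‖f x - f y‖ ≤ ω) {x y : E} (hx : x ∈ X) (hy : y ∈ X) :
    K (δ⁻¹ • (x - y)) * ‖f x - f y‖ ≤
      κ * (1 + δ / t) * ω * √(1 + ‖δ⁻¹ • (x - y)‖ ^ 2) ^ (-(2 * α - 1)) := by
  have hω_nonneg : 0 ≤ ω := (norm_nonneg _).trans (hω x hx x hx (by simpa using ht.le))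
  have hκ : 0 ≤ κ := by simpa using (hK_nonneg 0).trans (hK_decay 0)
  set z := δ⁻¹ • (x - y) with hz
  have hratio : ‖x - y‖ / t = δ / t * ‖z‖ := by
    rw [hz, norm_smul_of_nonneg (inv_nonneg.2 hδ.le)]
    field_simp
  have hf : ‖f x - f y‖ ≤ (1 + δ / t * ‖z‖) * ω := hratio ▸ norm_sub_le_of_convex hX ht hω hx hy
  calc K z * ‖f x - f y‖ ≤ κ * (1 + ‖z‖ ^ 2) ^ (-α) * ((1 + δ / t * ‖z‖) * ω) :=
        mul_le_mul (hK_decay z) hf (norm_nonneg _) (by positivity)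
    _ = κ * ω * ((1 + δ / t * ‖z‖) * (1 + ‖z‖ ^ 2) ^ (-α)) := by ring
    _ ≤ κ * ω * ((1 + δ / t) * √(1 + ‖z‖ ^ 2) ^ (-(2 * α - 1))) :=
        mul_le_mul_of_nonneg_left (one_add_mul_norm_mul_rpow_neg_le (by positivity) α z)
          (by positivity)
    _ = κ * (1 + δ / t) * ω * √(1 + ‖z‖ ^ 2) ^ (-(2 * α - 1)) := by ring

lemma abs_sub_le_omegaMod {d : ℕ} {X : Set (EuclideanSpace ℝ (Fin d))}
    {f : EuclideanSpace ℝ (Fin d) → ℝ} (hf : ∃ M : ℝ, ∀ x ∈ X, |f x| ≤ M) {t : ℝ}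
    {x y : EuclideanSpace ℝ (Fin d)} (hx : x ∈ X) (hy : y ∈ X) (hxy : ‖x - y‖ ≤ t) :
    |f x - f y| ≤ omegaMod X f t := by
  obtain ⟨M, hM⟩ := hf
  refine le_csSup ⟨M + M, ?_⟩ ⟨x, hx, y, hy, hxy, rfl⟩
  rintro _ ⟨a, ha, b, hb, -, rfl⟩
  exact (abs_sub _ _).trans (add_le_add (hM a ha) (hM b hb))

section Constants

lemma two_mul_sqrt_two_mul_pow_le {q : ℝ} (hq : 0 ≤ q) (d : ℕ) :
    (2 * √2 * q) ^ d ≤ (2 : ℝ) ^ ((3 * (d : ℝ) + 3) / 2) * q ^ d := by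
  have hbase : 2 * √2 = (2 : ℝ) ^ (3 / 2 : ℝ) := by
    rw [show (3 / 2 : ℝ) = 1 + 1 / 2 by norm_num, Real.rpow_add two_pos, Real.rpow_one,
      Real.sqrt_eq_rpow]
  rw [mul_pow, hbase, ← Real.rpow_mul_natCast zero_le_two]
  gcongr
  · exact one_le_two
  · linarith

lemma shellTerm_mul_div_eq (d : ℕ) (α : ℝ) (j : ℕ) :
    shellTerm d (2 * α - 1) j * (((j : ℝ) + 2) / (j + 1)) =
      (((j : ℝ) + 2) ^ (d + 1) - ((j : ℝ) + 2) * ((j : ℝ) + 1) ^ d) *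
        ((j : ℝ) + 1) ^ (-(2 * α)) := by
  have hj : (0 : ℝ) < j + 1 := by positivity
  rw [shellTerm, neg_sub, sub_eq_add_neg 1, Real.rpow_add hj, Real.rpow_one]
  field_simp
  ring

lemma tsum_shellTerm_le {d : ℕ} {α : ℝ} (hα : ((d : ℝ) + 1) / 2 < α) :
    ∑' j, shellTerm d (2 * α - 1) j ≤
      ∑' j : ℕ, (((j : ℝ) + 2) ^ (d + 1) - ((j : ℝ) + 2) * ((j : ℝ) + 1) ^ d) *
        ((j : ℝ) + 1) ^ (-(2 * α)) := by
  have hsummable : Summable (shellTerm d (2 * α - 1)) := summable_shellTerm (by linarith)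
  have hratio_ge (j : ℕ) : 1 ≤ ((j : ℝ) + 2) / (j + 1) :=
    (one_le_div (by positivity)).2 (by linarith)
  have hratio_le (j : ℕ) : ((j : ℝ) + 2) / (j + 1) ≤ 2 :=
    (div_le_iff₀ (by positivity)).2 (by linarith [j.cast_nonneg (α := ℝ)])
  simp only [← shellTerm_mul_div_eq]
  have hmajorant : Summable fun j : ℕ => shellTerm d (2 * α - 1) j * (((j : ℝ) + 2) / (j + 1)) :=
    (hsummable.mul_right 2).of_nonneg_of_le
      (fun j => mul_nonneg (shellTerm_nonneg d _ j) (by positivity))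
      fun j => mul_le_mul_of_nonneg_left (hratio_le j) (shellTerm_nonneg d _ j)
  exact hsummable.tsum_le_tsum
    (fun j => le_mul_of_one_le_right (shellTerm_nonneg d _ j) (hratio_ge j)) hmajorant

lemma pow_mul_one_add_tsum_shellTerm_le {d : ℕ} {α q : ℝ}
    (hα : ((d : ℝ) + 1) / 2 < α) (hq : 0 ≤ q) :
    (2 * √2 * q) ^ d * (1 + ∑' j, shellTerm d (2 * α - 1) j) ≤
      (2 : ℝ) ^ ((3 * (d : ℝ) + 3) / 2) * q ^ d *
        (1 + ∑' j : ℕ, (((j : ℝ) + 2) ^ (d + 1) - ((j : ℝ) + 2) * ((j : ℝ) + 1) ^ d) *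
          ((j : ℝ) + 1) ^ (-(2 * α))) :=
  mul_le_mul (two_mul_sqrt_two_mul_pow_le hq d) (add_le_add_right (tsum_shellTerm_le hα) 1)
    (add_nonneg zero_le_one (tsum_nonneg (shellTerm_nonneg d _))) (by positivity)

lemma inv_mul_rpow_one_div {b : ℝ} (hb : 0 ≤ b) (C p : ℝ) :
    C⁻¹ * b ^ (1 / p) = (C * b ^ (-1 / p))⁻¹ := by
  rw [mul_inv, neg_div, Real.rpow_neg hb, inv_inv]

end Constants

section Jackson

variable {E F : Type*} [NormedAddCommGroup E] [NormedSpace ℝ E] [FiniteDimensional ℝ E]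
  [SeminormedAddCommGroup F] [NormedSpace ℝ F]

theorem jackson_type_error_estimate_general {X : Set E} (hX : Convex ℝ X) {S : Finset E}
    (hSX : ↑S ⊆ X) {s δ t : ℝ} (hs : 0 < s) (hsδ : s ≤ 2 * δ) (ht : 0 < t)
    (hsep : (S : Set E).Pairwise fun y z => s ≤ ‖y - z‖) (hfill : ∀ x ∈ X, ∃ y ∈ S, ‖x - y‖ ≤ δ)
    {κ α m : ℝ} (hα : ((finrank ℝ E : ℝ) + 1) / 2 < α) {K : E → ℝ} (hK_nonneg : ∀ z, 0 ≤ K z)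
    (hm : 0 < m) (hKm : ∀ z ∈ closedBall 0 1, m ≤ K z)
    (hK_decay : ∀ z, K z ≤ κ * (1 + ‖z‖ ^ 2) ^ (-α)) {f : E → F} {ω : ℝ}
    (hω : ∀ x ∈ X, ∀ y ∈ X, ‖x - y‖ ≤ t → ‖f x - f y‖ ≤ ω) {x : E} (hx : x ∈ X) :
    ‖f x - S.centerMass (fun y => K (δ⁻¹ • (x - y))) f‖ ≤
      κ * m⁻¹ * (δ / t + 1) *
        ((2 : ℝ) ^ ((3 * (finrank ℝ E : ℝ) + 3) / 2) * (δ / s) ^ finrank ℝ E) *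
        (1 + ∑' j : ℕ, (((j : ℝ) + 2) ^ (finrank ℝ E + 1) -
          ((j : ℝ) + 2) * ((j : ℝ) + 1) ^ finrank ℝ E) * ((j : ℝ) + 1) ^ (-(2 * α))) * ω := by
  have hδ : 0 < δ := by linarith
  have hω_nonneg : 0 ≤ ω := (norm_nonneg _).trans (hω x hx x hx (by simpa using ht.le))
  have hκ : 0 ≤ κ := by simpa using (hK_nonneg 0).trans (hK_decay 0)
  let z (y : E) : E := δ⁻¹ • (x - y)
  let ρ (y : E) : ℝ := √(1 + ‖z y‖ ^ 2)
  have hmass : m ≤ ∑ y ∈ S, K (z y) := by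
    obtain ⟨y, hy, hxy⟩ := hfill x hx
    have hz : z y ∈ closedBall 0 1 := by
      rw [mem_closedBall_zero_iff, norm_smul_of_nonneg (inv_nonneg.2 hδ.le), inv_mul_eq_div]
      exact div_le_one_of_le₀ hxy hδ.le
    exact (hKm _ hz).trans (Finset.single_le_sum (fun y _ => hK_nonneg (z y)) hy)
  have hnode : ∀ y ∈ S, K (z y) * ‖f x - f y‖ ≤ κ * (1 + δ / t) * ω * ρ y ^ (-(2 * α - 1)) :=
    fun y hy => kernel_mul_norm_sub_le hX hδ ht hK_nonneg hK_decay hω hx (hSX hy)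
  have hsum : ∑ y ∈ S, ρ y ^ (-(2 * α - 1)) ≤ (2 * √2 * (δ / s)) ^ finrank ℝ E *
      (1 + ∑' j, shellTerm (finrank ℝ E) (2 * α - 1) j) :=
    sum_rpow_neg_le_of_card_filter_lt_le
      (fun y _ => Real.one_le_sqrt.2 (le_add_of_nonneg_right (by positivity))) (by linarith)
      fun k => card_filter_sqrt_lt_le x hs hsep hsδ k.cast_nonneg
  calc ‖f x - S.centerMass (fun y => K (z y)) f‖
      ≤ (∑ y ∈ S, K (z y))⁻¹ * ∑ y ∈ S, K (z y) * ‖f x - f y‖ :=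
        norm_sub_centerMass_le (fun y _ => hK_nonneg _) (hm.trans_le hmass) f (f x)
    _ ≤ m⁻¹ * ∑ y ∈ S, κ * (1 + δ / t) * ω * ρ y ^ (-(2 * α - 1)) :=
        mul_le_mul (inv_anti₀ hm hmass) (Finset.sum_le_sum hnode)
          (Finset.sum_nonneg fun y _ => mul_nonneg (hK_nonneg _) (norm_nonneg _)) (by positivity)
    _ = κ * m⁻¹ * (δ / t + 1) * (∑ y ∈ S, ρ y ^ (-(2 * α - 1))) * ω := by
        rw [← Finset.mul_sum]; ring
    _ ≤ _ := by
        rw [mul_assoc (κ * m⁻¹ * (δ / t + 1)) (_ * _)]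
        gcongr
        exact hsum.trans (pow_mul_one_add_tsum_shellTerm_le hα (by positivity))

end Jackson

theorem jackson_type_error_estimate (d n : ℕ) (hd : 1 ≤ d) (hn : 1 ≤ n)
    (X : Set (EuclideanSpace ℝ (Fin d))) (hX : Convex ℝ X) (c C : ℝ) (hc : 0 < c)
    (hcC : c ≤ 2 * C) (Xn : Finset (EuclideanSpace ℝ (Fin d))) (hXnX : ↑Xn ⊆ X)
    (hsep : ∀ x ∈ Xn, ∀ y ∈ Xn, x ≠ y → c * (n : ℝ) ^ (-(1 : ℝ) / d) ≤ ‖x - y‖)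
    (hfill : ∀ x ∈ X, ∃ y ∈ Xn, ‖x - y‖ ≤ C * (n : ℝ) ^ (-(1 : ℝ) / d))
    (κ α : ℝ) (hκ : 0 < κ) (hα : ((d : ℝ) + 2) / 2 < α)
    (K : EuclideanSpace ℝ (Fin d) → ℝ) (hKcont : Continuous K) (hKnonneg : ∀ x, 0 ≤ K x)
    (m₁ : ℝ) (hm₁ : m₁ = sInf (K '' closedBall (0 : EuclideanSpace ℝ (Fin d)) 1))
    (hm₁pos : 0 < m₁) (hKdecay : ∀ x, K x ≤ κ * (1 + ‖x‖ ^ 2) ^ (-α))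
    (f : EuclideanSpace ℝ (Fin d) → ℝ) (hfc : ContinuousOn f X)
    (hfb : ∃ M : ℝ, ∀ x ∈ X, |f x| ≤ M) :
    ∀ x ∈ X,
      |f x - (∑ y ∈ Xn, K ((C⁻¹ * (n : ℝ) ^ ((1 : ℝ) / d)) • (x - y)))⁻¹ *
          ∑ y ∈ Xn, f y * K ((C⁻¹ * (n : ℝ) ^ ((1 : ℝ) / d)) • (x - y))| ≤
        κ * m₁⁻¹ * (C + 1) * ((2 : ℝ) ^ ((3 * (d : ℝ) + 3) / 2) * (C / c) ^ d) *
          (1 + ∑' j : ℕ, (((j : ℝ) + 2) ^ (d + 1) - ((j : ℝ) + 2) * ((j : ℝ) + 1) ^ d) *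
            ((j : ℝ) + 1) ^ (-(2 * α))) *
          omegaMod X f ((n : ℝ) ^ (-(1 : ℝ) / d)) := by
  intro x hx
  have hmesh : 0 < (n : ℝ) ^ (-(1 : ℝ) / d) := by positivity
  have hKm : ∀ z ∈ closedBall (0 : EuclideanSpace ℝ (Fin d)) 1, m₁ ≤ K z := fun z hz =>
    hm₁ ▸ csInf_le ⟨0, Set.forall_mem_image.2 fun z _ => hKnonneg z⟩ (Set.mem_image_of_mem K hz)
  have hbound := jackson_type_error_estimate_general (f := f) hX hXnX (mul_pos hc hmesh)
    (by rw [← mul_assoc]; gcongr) hmesh (fun y hy z hz => hsep y hy z hz) hfill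
    (by rw [finrank_euclideanSpace_fin]; linarith) hKnonneg hm₁pos hKm hKdecay
    (fun _ hx _ hy => abs_sub_le_omegaMod hfb hx hy) hx
  rw [finrank_euclideanSpace_fin, mul_div_cancel_right₀ C hmesh.ne',
    mul_div_mul_right C c hmesh.ne'] at hbound
  simpa only [inv_mul_rpow_one_div n.cast_nonneg, mul_comm (f _), Finset.centerMass, smul_eq_mul,
    Real.norm_eq_abs] using hbound
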